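/- arXiv:2302.13927 — 2 statements merged into one kernel-verified Lean document; each statement's English description precedes it below -/
import Mathlib

section
/- The vector π on {(0,0),(0,1),(1,0),(1,1)} given by π(0,0) = q[q + (1−q)a]/D, π(0,1) = π(1,0) = pq(1−a)/D and π(1,1) = p[p + (1−p)a]/D, where D = (p+q)[p(1−a) + q + (1−q)a], has nonnegative entries, sums to 1, and is an invariant (stationary) distribution of the joint source–reconstruction chain M, i.e. πM = π. (This is the paper's Lemma 3 with a = p_α·p_s.) -/
/-!
For `a > 0`, the reconstruction is in steady state the source symbol of `k` steps ago with
probability `a (1 - a) ^ k`. A two-state source can be viewed as a chain that at each step keeps its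
state with weight `r = 1 - p - q` and otherwise redraws it from its stationary law
`μ = (q, p) / (p + q)`. Over `k` steps it is never redrawn with weight `r ^ k`, and otherwise the
present symbol is an independent draw from `μ`. Hence the stationary law of the pair is the mixture
of the diagonal coupling of `μ` with itself, with weight
`∑ k, a (1 - a) ^ k r ^ k = a / (1 - (1 - a) r)`, and the independent coupling.
-/

open Matrix

section Couplings

variable {α R : Type*} [DecidableEq α]

/-- The mixture of the diagonal coupling (with weight `θ`) and the independent coupling (with weight
`1 - θ`) of `μ` with itself. -/
def couplingMixture [CommRing R] (μ : α → R) (θ : R) : α × α → R :=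
  fun s => (1 - θ) * (μ s.1 * μ s.2) + θ * (if s.1 = s.2 then μ s.1 else 0)

lemma couplingMixture_swap [CommRing R] (μ : α → R) (θ : R) (x y : α) :
    couplingMixture μ θ (x, y) = couplingMixture μ θ (y, x) := by
  rcases eq_or_ne x y with rfl | hxy
  · rfl
  · simp [couplingMixture, hxy, hxy.symm, mul_comm (μ x)]

variable [Fintype α]

lemma sum_couplingMixture_right [CommRing R] {μ : α → R} (hμ : ∑ x, μ x = 1) (θ : R) (x : α) :
    ∑ y, couplingMixture μ θ (x, y) = μ x := by
  simp only [couplingMixture, Finset.sum_add_distrib, ← Finset.mul_sum, hμ, Finset.sum_ite_eq,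
    Finset.mem_univ, if_true]
  ring

lemma sum_couplingMixture_left [CommRing R] {μ : α → R} (hμ : ∑ x, μ x = 1) (θ : R) (y : α) :
    ∑ x, couplingMixture μ θ (x, y) = μ y := by
  simp only [couplingMixture_swap μ θ _ y, sum_couplingMixture_right hμ]

lemma couplingMixture_mem_stdSimplex [CommRing R] [PartialOrder R] [IsOrderedRing R]
    {μ : α → R} (hμ : μ ∈ stdSimplex R α) {θ : R} (hθ₀ : 0 ≤ θ) (hθ₁ : θ ≤ 1) :
    couplingMixture μ θ ∈ stdSimplex R (α × α) := by
  obtain ⟨hμ_nonneg, hμ_sum⟩ := hμ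
  refine ⟨fun s => ?_, ?_⟩
  · have hdiag : 0 ≤ if s.1 = s.2 then μ s.1 else 0 := by split_ifs <;> simp [hμ_nonneg]
    exact add_nonneg (mul_nonneg (sub_nonneg.2 hθ₁) (mul_nonneg (hμ_nonneg _) (hμ_nonneg _)))
      (mul_nonneg hθ₀ hdiag)
  · simp only [Fintype.sum_prod_type, sum_couplingMixture_right hμ_sum, hμ_sum]

end Couplings

section Kernels

variable {α R : Type*} [DecidableEq α] [CommRing R]

/-- The joint kernel of a source with kernel `P` and its reconstruction, when each new source symbol
is delivered with probability `a` and the previous reconstruction is kept otherwise. -/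
def jointKernel (P : Matrix α α R) (a : R) : Matrix (α × α) (α × α) R :=
  of fun s t =>
    P s.1 t.1 * (a * (if t.2 = t.1 then 1 else 0) + (1 - a) * (if t.2 = s.2 then 1 else 0))

/-- The kernel that keeps the current state with weight `r` and otherwise redraws it from `μ`. The
weight `r` may be negative, as it is for a two-state source with `p + q > 1`. -/
def redrawKernel (μ : α → R) (r : R) : Matrix α α R :=
  (1 - r) • of (fun _ => μ) + r • 1

variable [Fintype α]

lemma vecMul_jointKernel_apply (P : Matrix α α R) (a : R) (π : α × α → R) (y z : α) :
    (π ᵥ* jointKernel P a) (y, z) =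
      a * (if z = y then ((fun x => ∑ w, π (x, w)) ᵥ* P) y else 0) +
        (1 - a) * ((fun x => π (x, z)) ᵥ* P) y := by
  have hrow (x : α) : ∑ w, π (x, w) * jointKernel P a (x, w) (y, z) =
      a * (if z = y then (∑ w, π (x, w)) * P x y else 0) + (1 - a) * (π (x, z) * P x y) := by
    simp only [jointKernel, of_apply, mul_add, Finset.sum_add_distrib]
    congr 1
    · rw [← Finset.sum_mul]
      split_ifs <;> ring
    · simp only [mul_ite, mul_one, mul_zero, Finset.sum_ite_eq, Finset.mem_univ, if_true]
      ring
  simp only [vecMul, dotProduct, Fintype.sum_prod_type, hrow, Finset.sum_add_distrib,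
    ← Finset.mul_sum]
  split_ifs <;> simp

lemma vecMul_redrawKernel (μ : α → R) (r : R) (c : α → R) :
    c ᵥ* redrawKernel μ r = ((1 - r) * ∑ x, c x) • μ + r • c := by
  rw [redrawKernel, vecMul_add, vecMul_smul, vecMul_smul, vecMul_one, mul_smul]
  congr 2
  ext y
  simp [vecMul, dotProduct, Finset.sum_mul]

lemma vecMul_redrawKernel_self {μ : α → R} (hμ : ∑ x, μ x = 1) (r : R) :
    μ ᵥ* redrawKernel μ r = μ := by
  rw [vecMul_redrawKernel, hμ, mul_one, ← add_smul, sub_add_cancel, one_smul]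

/-- The condition on `θ` balances the diagonal weight over one step: a delivery restores it, and
otherwise it survives if the source is not redrawn. -/
theorem couplingMixture_vecMul_jointKernel {μ : α → R} (hμ : ∑ x, μ x = 1) {r a θ : R}
    (hθ : a + (1 - a) * r * θ = θ) :
    couplingMixture μ θ ᵥ* jointKernel (redrawKernel μ r) a = couplingMixture μ θ := by
  ext ⟨y, z⟩
  rw [vecMul_jointKernel_apply]
  simp only [sum_couplingMixture_right hμ, vecMul_redrawKernel_self hμ, vecMul_redrawKernel,
    sum_couplingMixture_left hμ, Pi.add_apply, Pi.smul_apply, smul_eq_mul]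
  rcases eq_or_ne z y with rfl | hzy
  · simp only [couplingMixture, if_true]
    linear_combination (μ z - μ z * μ z) * hθ
  · simp only [couplingMixture, if_neg hzy, if_neg hzy.symm]
    linear_combination (-μ y * μ z) * hθ

end Kernels

section DiagonalWeight

lemma one_sub_one_sub_mul_pos {R : Type*} [CommRing R] [PartialOrder R] [IsOrderedRing R]
    {r a : R} (hr : r < 1) (ha₀ : 0 ≤ a) (ha₁ : a ≤ 1) :
    0 < 1 - (1 - a) * r := by
  have hconvex : 1 - (1 - a) * r = a + (1 - a) * (1 - r) := by ring
  rw [hconvex]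
  rcases ha₀.eq_or_lt with rfl | ha_pos
  · simpa using hr
  · exact add_pos_of_pos_of_nonneg ha_pos (mul_nonneg (sub_nonneg.2 ha₁) (sub_nonneg.2 hr.le))

variable {K : Type*} [Field K]

/-- The total weight `∑ k, a (1 - a) ^ k r ^ k` of the event that the source has not been redrawn
since the last delivery, in closed form. -/
def diagonalWeight (r a : K) : K :=
  a / (1 - (1 - a) * r)

lemma diagonalWeight_fixed {r a : K} (h : 1 - (1 - a) * r ≠ 0) :
    a + (1 - a) * r * diagonalWeight r a = diagonalWeight r a := by
  unfold diagonalWeight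
  field_simp
  ring

lemma one_sub_diagonalWeight {r a : K} (h : 1 - (1 - a) * r ≠ 0) :
    1 - diagonalWeight r a = (1 - a) * (1 - r) / (1 - (1 - a) * r) := by
  rw [diagonalWeight, one_sub_div h]
  ring

variable [LinearOrder K] [IsStrictOrderedRing K] {r a : K}

lemma diagonalWeight_nonneg (hr : r < 1) (ha₀ : 0 ≤ a) (ha₁ : a ≤ 1) :
    0 ≤ diagonalWeight r a :=
  div_nonneg ha₀ (one_sub_one_sub_mul_pos hr ha₀ ha₁).le

lemma diagonalWeight_le_one (hr : r < 1) (ha₀ : 0 ≤ a) (ha₁ : a ≤ 1) :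
    diagonalWeight r a ≤ 1 := by
  have hdenom := one_sub_one_sub_mul_pos hr ha₀ ha₁
  rw [← sub_nonneg, one_sub_diagonalWeight hdenom.ne']
  exact div_nonneg (mul_nonneg (sub_nonneg.2 ha₁) (sub_nonneg.2 hr.le)) hdenom.le

end DiagonalWeight

section BirthDeath

variable {K : Type*} [Field K] {p q a : K}

/-- The stationary law of the two-state source that leaves `0` with probability `p` and `1` with
probability `q`. -/
def birthDeathLaw (p q : K) : Fin 2 → K :=
  ![q / (p + q), p / (p + q)]

@[simp]
lemma birthDeathLaw_zero (p q : K) : birthDeathLaw p q 0 = q / (p + q) := rfl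

@[simp]
lemma birthDeathLaw_one (p q : K) : birthDeathLaw p q 1 = p / (p + q) := rfl

lemma redrawKernel_birthDeathLaw (hpq : p + q ≠ 0) :
    redrawKernel (birthDeathLaw p q) (1 - p - q) = !![1 - p, p; q, 1 - q] := by
  have hredraw : 1 - (1 - p - q) = p + q := by ring
  have hzero : (p + q) * (q / (p + q)) = q := mul_div_cancel₀ q hpq
  have hone : (p + q) * (p / (p + q)) = p := mul_div_cancel₀ p hpq
  have hstay : p + (1 - p - q) = 1 - q := by ring
  ext x y
  fin_cases x <;> fin_cases y <;> simp [redrawKernel, hredraw, hzero, hone, hstay]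

lemma couplingMixture_birthDeathLaw (hpq : p + q ≠ 0) (h : 1 - (1 - a) * (1 - p - q) ≠ 0) :
    couplingMixture (birthDeathLaw p q) (diagonalWeight (1 - p - q) a) =
      fun s => !![q * (q + (1 - q) * a), p * q * (1 - a);
        p * q * (1 - a), p * (p + (1 - p) * a)] s.1 s.2 /
          ((p + q) * (p * (1 - a) + q + (1 - q) * a)) := by
  have hdenom : p * (1 - a) + q + (1 - q) * a = 1 - (1 - a) * (1 - p - q) := by ring
  rw [hdenom]
  ext ⟨x, y⟩
  simp only [couplingMixture, one_sub_diagonalWeight h]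
  simp only [diagonalWeight]
  revert x y
  simp only [Fin.forall_fin_two, birthDeathLaw_zero, birthDeathLaw_one, of_apply, cons_val_zero,
    cons_val_one, cons_val_fin_one, cons_val', zero_ne_one, one_ne_zero, if_true, if_false]
  refine ⟨⟨?_, ?_⟩, ?_, ?_⟩ <;> field_simp <;> ring

lemma birthDeathLaw_mem_stdSimplex [LinearOrder K] [IsStrictOrderedRing K]
    (hp : 0 ≤ p) (hq : 0 ≤ q) (hpq : 0 < p + q) :
    birthDeathLaw p q ∈ stdSimplex K (Fin 2) := by
  refine ⟨Fin.forall_fin_two.2 ⟨div_nonneg hq hpq.le, div_nonneg hp hpq.le⟩, ?_⟩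
  rw [Fin.sum_univ_two, birthDeathLaw_zero, birthDeathLaw_one, ← add_div, add_comm q p,
    div_self hpq.ne']

end BirthDeath

theorem stmt_3_general {K : Type*} [Field K] [LinearOrder K] [IsStrictOrderedRing K] {p q a : K}
    (hp : 0 ≤ p) (hq : 0 ≤ q) (hpq : 0 < p + q) (ha : 0 ≤ a) (ha' : a ≤ 1)
    {P : Fin 2 → Fin 2 → K}
    (hP00 : P 0 0 = 1 - p) (hP01 : P 0 1 = p) (hP10 : P 1 0 = q) (hP11 : P 1 1 = 1 - q)
    {M : (Fin 2 × Fin 2) → (Fin 2 × Fin 2) → K}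
    (hM : ∀ s t, M s t =
      P s.1 t.1 * (a * (if t.2 = t.1 then 1 else 0) + (1 - a) * (if t.2 = s.2 then 1 else 0)))
    {D : K} (hD : D = (p + q) * (p * (1 - a) + q + (1 - q) * a))
    {pi : Fin 2 × Fin 2 → K}
    (hpi00 : pi (0, 0) = q * (q + (1 - q) * a) / D)
    (hpi01 : pi (0, 1) = p * q * (1 - a) / D)
    (hpi10 : pi (1, 0) = p * q * (1 - a) / D)
    (hpi11 : pi (1, 1) = p * (p + (1 - p) * a) / D) :
    (∀ s, 0 ≤ pi s) ∧ (∑ s : Fin 2 × Fin 2, pi s = 1) ∧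
      (∀ t, ∑ s : Fin 2 × Fin 2, pi s * M s t = pi t) := by
  have hr : 1 - p - q < 1 := by linarith
  have hweight := (one_sub_one_sub_mul_pos hr ha ha').ne'
  have hlaw := birthDeathLaw_mem_stdSimplex hp hq hpq
  have hP : P = redrawKernel (birthDeathLaw p q) (1 - p - q) := by
    rw [redrawKernel_birthDeathLaw hpq.ne']
    ext x y
    fin_cases x <;> fin_cases y <;> assumption
  obtain rfl : M = jointKernel (redrawKernel (birthDeathLaw p q) (1 - p - q)) a :=
    hP ▸ funext₂ hM
  obtain rfl : pi = couplingMixture (birthDeathLaw p q) (diagonalWeight (1 - p - q) a) := by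
    rw [couplingMixture_birthDeathLaw hpq.ne' hweight, ← hD]
    ext ⟨x, y⟩
    fin_cases x <;> fin_cases y <;> assumption
  obtain ⟨hnonneg, hsum⟩ := couplingMixture_mem_stdSimplex hlaw
    (diagonalWeight_nonneg hr ha ha') (diagonalWeight_le_one hr ha ha')
  exact ⟨hnonneg, hsum,
    congrFun (couplingMixture_vecMul_jointKernel hlaw.2 (diagonalWeight_fixed hweight))⟩

/-- Lemma 3 of the paper: the stationary distribution of the joint source–reconstruction
chain for the two-state Birth-Death source under the randomized stationary policy. -/
theorem stmt_3 (p q a : ℝ) (hp : 0 < p) (hp' : p < 1) (hq : 0 < q) (hq' : q < 1)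
    (ha : 0 ≤ a) (ha' : a ≤ 1)
    (P : Fin 2 → Fin 2 → ℝ)
    (hP00 : P 0 0 = 1 - p) (hP01 : P 0 1 = p) (hP10 : P 1 0 = q) (hP11 : P 1 1 = 1 - q)
    (M : (Fin 2 × Fin 2) → (Fin 2 × Fin 2) → ℝ)
    (hM : ∀ s t, M s t =
      P s.1 t.1 * (a * (if t.2 = t.1 then 1 else 0) + (1 - a) * (if t.2 = s.2 then 1 else 0)))
    (D : ℝ) (hD : D = (p + q) * (p * (1 - a) + q + (1 - q) * a))
    (pi : Fin 2 × Fin 2 → ℝ)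
    (hpi00 : pi (0, 0) = q * (q + (1 - q) * a) / D)
    (hpi01 : pi (0, 1) = p * q * (1 - a) / D)
    (hpi10 : pi (1, 0) = p * q * (1 - a) / D)
    (hpi11 : pi (1, 1) = p * (p + (1 - p) * a) / D) :
    (∀ s, 0 ≤ pi s) ∧ (∑ s : Fin 2 × Fin 2, pi s = 1) ∧
      (∀ t, ∑ s : Fin 2 × Fin 2, pi s * M s t = pi t) :=
  stmt_3_general hp.le hq.le (add_pos hp hq) ha ha' hP00 hP01 hP10 hP11 hM hD hpi00 hpi01 hpi10
    hpi11
end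

section
/- Let θ₁ = (p·p_s − 3p²(1 − p_s)) / ( (2p + 3p² − 1)p_s² − (p + 3p²)p_s ), and assume 0 < θ₁ ≤ 1. Then for every p_α with 0 < p_α ≤ θ₁, V(p_α) ≤ V(1), i.e. the randomized stationary policy has reconstruction-error variance no larger than the semantics-aware policy. (This is the variance comparison against the semantics-aware policy in the paper's Remark 1.) -/
/-!
Since `V(1) - V(x) = (f(x) - f(1)) (f(x) + f(1) - 1)` and `f` is strictly decreasing, for `x < 1`
the inequality `V(x) ≤ V(1)` amounts to `1 ≤ f(x) + f(1)`. Clearing the positive denominators makes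
this affine in `x`, with a negative leading coefficient, so that it reads `x ≤ θ₁`.
-/

theorem mul_one_sub_le_mul_one_sub_iff_of_lt {R : Type*} [CommRing R] [LinearOrder R]
    [IsStrictOrderedRing R] {a b : R} (h : a < b) :
    b * (1 - b) ≤ a * (1 - a) ↔ 1 ≤ a + b := by
  have factor : a * (1 - a) - b * (1 - b) = (b - a) * (a + b - 1) := by ring
  rw [← sub_nonneg, factor, mul_nonneg_iff_of_pos_left (sub_pos.2 h), sub_nonneg]

section ThreeStateSource

variable {K : Type*} [Field K]

/-- The time-averaged reconstruction error of a three-state symmetric Markov source with transition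
probability `p`, as a function of the probability `q` of a successful update in a time slot. The
randomized stationary policy has `q = x * ps`, so that `f x` is `reconstructionError p (x * ps)`. -/
def reconstructionError (p q : K) : K :=
  2 * p * (1 - q) / (3 * p + q * (1 - 3 * p))

/-- The variance of the real-time reconstruction error, which is a Bernoulli variable of mean
`reconstructionError p q`. -/
def reconstructionVariance (p q : K) : K :=
  reconstructionError p q * (1 - reconstructionError p q)

/-- The threshold `θ₁`: the sampling probability up to which the randomized stationary policy does
not exceed the variance of the semantics-aware policy, for success probability `r`. -/
def varianceThreshold (p r : K) : K :=
  (p * r - 3 * p ^ 2 * (1 - r)) / ((2 * p + 3 * p ^ 2 - 1) * r ^ 2 - (p + 3 * p ^ 2) * r)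

variable [LinearOrder K] [IsStrictOrderedRing K] {p q r x : K}

theorem reconstructionError_denom_pos (hp : 0 < p) (hq : q ∈ Set.Icc 0 1) :
    0 < 3 * p + q * (1 - 3 * p) := by
  obtain ⟨hq₀, hq₁⟩ := hq
  have convex_comb : 3 * p + q * (1 - 3 * p) = 3 * p * (1 - q) + q := by ring
  rw [convex_comb]
  rcases hq₀.eq_or_lt with rfl | hq_pos
  · simpa using hp
  · have : 0 ≤ 1 - q := sub_nonneg.2 hq₁
    positivity

theorem reconstructionError_strictAntiOn (hp : 0 < p) :
    StrictAntiOn (reconstructionError p) (Set.Icc 0 1) := by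
  intro q hq r hr hqr
  rw [reconstructionError, reconstructionError,
    div_lt_div_iff₀ (reconstructionError_denom_pos hp hr) (reconstructionError_denom_pos hp hq)]
  linarith [mul_pos hp (sub_pos.2 hqr)]

-- With `a`, `b` the two errors, this is `(1 - a) * (1 - b) ≤ a * b` with the denominators cleared,
-- as `1 - reconstructionError p q` has numerator `q + p * (1 - q)`.
theorem one_le_reconstructionError_add_iff (hp : 0 < p) (hq : q ∈ Set.Icc 0 1)
    (hr : r ∈ Set.Icc 0 1) :
    1 ≤ reconstructionError p r + reconstructionError p q ↔
      (q + p * (1 - q)) * (r + p * (1 - r)) ≤ (2 * p * (1 - q)) * (2 * p * (1 - r)) := by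
  have hDq := reconstructionError_denom_pos hp hq
  have hDr := reconstructionError_denom_pos hp hr
  rw [reconstructionError, reconstructionError, div_add_div _ _ hDr.ne' hDq.ne',
    one_le_div (mul_pos hDr hDq)]
  constructor <;> intro h <;> linarith

theorem reconstructionVariance_le_iff_of_lt (hp : 0 < p) (hq : q ∈ Set.Icc 0 1)
    (hr : r ∈ Set.Icc 0 1) (hqr : q < r) :
    reconstructionVariance p q ≤ reconstructionVariance p r ↔
      (q + p * (1 - q)) * (r + p * (1 - r)) ≤ (2 * p * (1 - q)) * (2 * p * (1 - r)) :=
  (mul_one_sub_le_mul_one_sub_iff_of_lt (reconstructionError_strictAntiOn hp hq hr hqr)).trans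
    (one_le_reconstructionError_add_iff hp hq hr)

theorem varianceThreshold_denom_neg (hp : 0 < p) (hp₁ : p < 1) (hr : 0 < r) (hr₁ : r ≤ 1) :
    (2 * p + 3 * p ^ 2 - 1) * r ^ 2 - (p + 3 * p ^ 2) * r < 0 := by
  have factor : (2 * p + 3 * p ^ 2 - 1) * r ^ 2 - (p + 3 * p ^ 2) * r =
      -(r * ((p + 3 * p ^ 2) * (1 - r) + r * (1 - p))) := by ring
  have : 0 ≤ 1 - r := sub_nonneg.2 hr₁
  have : 0 < 1 - p := sub_pos.2 hp₁
  rw [factor, neg_lt_zero]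
  positivity

theorem le_varianceThreshold_iff (hp : 0 < p) (hp₁ : p < 1) (hr : 0 < r) (hr₁ : r ≤ 1) :
    x ≤ varianceThreshold p r ↔
      (x * r + p * (1 - x * r)) * (r + p * (1 - r)) ≤
        (2 * p * (1 - x * r)) * (2 * p * (1 - r)) := by
  rw [varianceThreshold, le_div_iff_of_neg (varianceThreshold_denom_neg hp hp₁ hr hr₁)]
  constructor <;> intro h <;> linarith

theorem stmt_13_general (hp : 0 < p) (hp₁ : p < 1) (hr : 0 < r) (hr₁ : r ≤ 1)
    (hx : 0 ≤ x) (hx₁ : x < 1) :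
    reconstructionVariance p (x * r) ≤ reconstructionVariance p r ↔ x ≤ varianceThreshold p r := by
  have hxr : x * r < r := mul_lt_of_lt_one_left hr hx₁
  rw [le_varianceThreshold_iff hp hp₁ hr hr₁]
  exact reconstructionVariance_le_iff_of_lt hp ⟨mul_nonneg hx hr.le, hxr.le.trans hr₁⟩
    ⟨hr.le, hr₁⟩ hxr

end ThreeStateSource

/-- Variance comparison against the semantics-aware policy in Remark 1 of the paper:
for 0 < p_α ≤ θ₁ the randomized stationary policy has reconstruction-error variance no
larger than the semantics-aware policy. -/
theorem stmt_13 (p ps : ℝ) (hp : 0 < p) (hp' : p ≤ 1 / 2) (hps : 0 < ps) (hps' : ps ≤ 1)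
    (f V : ℝ → ℝ)
    (hf : ∀ x, f x = 2 * p * (1 - x * ps) / (3 * p + x * ps * (1 - 3 * p)))
    (hV : ∀ x, V x = f x * (1 - f x))
    (θ : ℝ)
    (hθ : θ = (p * ps - 3 * p ^ 2 * (1 - ps)) /
      ((2 * p + 3 * p ^ 2 - 1) * ps ^ 2 - (p + 3 * p ^ 2) * ps))
    (hθpos : 0 < θ) (hθle : θ ≤ 1) :
    ∀ pa : ℝ, 0 < pa → pa ≤ θ → V pa ≤ V 1 := by
  intro pa hpa hle
  have hV_eq (x : ℝ) : V x = reconstructionVariance p (x * ps) := by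
    rw [hV, hf, reconstructionVariance, reconstructionError]
  rcases (hle.trans hθle).eq_or_lt with rfl | hpa₁
  · rfl
  · rw [hV_eq, hV_eq, one_mul]
    exact (stmt_13_general hp (by linarith) hps hps' hpa.le hpa₁).2 (hle.trans_eq hθ)
end
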